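/- arXiv:2604.24106 — 5 statements merged into one kernel-verified Lean document; each statement's English description precedes it below -/
import Mathlib

section
/- Let p and n be positive integers and let Γ ⊆ [0,∞) be a set of real numbers satisfying the descending chain condition. Then there exists a positive integer m₀ ≥ n+2, depending only on p, n and Γ, with the following property. For γ ∈ Γ set γ_p := (1/p)·⌊(p−1)γ⌋. Then for every γ ∈ Γ with γ > 0 and every real number m ≥ m₀: (1) m·(γ − γ_p) > 1 and ⌊m·γ⌋ > m·γ_p; and (2) if moreover γ < 1, then (⌊m·γ/(1−γ)⌋ − n·γ_p/(1−γ_p))/(m−n) > γ_p/(1−γ_p). -/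
/-!
The only consequence of DCC that is needed is a uniform lower bound `ε > 0` on the positive
elements of `Γ` (`DCC.exists_pos_lower_bound`). Since `γ_p ≤ (p - 1)γ / p`, the gap satisfies
`γ - γ_p ≥ γ / p ≥ ε / p`, so `m (γ - γ_p) > 1` as soon as `m > p / ε`; a gap larger than `1`
survives rounding `mγ` down, which gives both inequalities for arbitrary `γ > 0`.

When `γ < 1`, clearing the denominator `m - n` turns the last claim into
`m γ_p / (1 - γ_p) < ⌊m γ / (1 - γ)⌋`.
The difference `γ / (1 - γ) - γ_p / (1 - γ_p) = (γ - γ_p) / ((1 - γ)(1 - γ_p))` is at least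
`γ - γ_p`, so the same gap argument applies.
-/

/-- A set of real numbers satisfies the descending chain condition (DCC) if it
contains no infinite strictly decreasing sequence. -/
def DCC (S : Set ℝ) : Prop := ∀ f : ℕ → ℝ, (∀ k, f k ∈ S) → ¬ StrictAnti f

/-- For `γ ∈ Γ`, `γ_p := (1/p)·⌊(p−1)·γ⌋`. -/
noncomputable def gammaP (p : ℕ) (γ : ℝ) : ℝ := (⌊((p : ℝ) - 1) * γ⌋ : ℝ) / p

/-- Otherwise, choosing at each step a positive element below the previous one would give an
infinite strictly decreasing sequence. -/
theorem DCC.exists_pos_lower_bound {S : Set ℝ} (h : DCC S) :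
    ∃ ε : ℝ, 0 < ε ∧ ∀ x ∈ S, 0 < x → ε ≤ x := by
  by_contra! H
  choose! next hmem hpos hlt using H
  have hf : ∀ k : ℕ, 0 < next^[k] 1 := by
    intro k
    induction k with
    | zero => simp
    | succ k ih =>
      rw [Function.iterate_succ_apply']
      exact hpos _ ih
  refine h (fun k => next^[k + 1] 1) (fun k => ?_) (strictAnti_nat_of_succ_lt fun k => ?_)
  · rw [Function.iterate_succ_apply']
    exact hmem _ (hf k)
  · rw [Function.iterate_succ_apply' next (k + 1)]
    exact hlt _ (hf (k + 1))

theorem gammaP_nonneg {p : ℕ} (hp : 0 < p) {γ : ℝ} (hγ : 0 ≤ γ) : 0 ≤ gammaP p γ := by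
  have hp1 : (1 : ℝ) ≤ p := by exact_mod_cast hp
  have : 0 ≤ ⌊((p : ℝ) - 1) * γ⌋ := Int.floor_nonneg.2 (mul_nonneg (by linarith) hγ)
  have : (0 : ℝ) ≤ ⌊((p : ℝ) - 1) * γ⌋ := by exact_mod_cast this
  unfold gammaP
  positivity

theorem div_le_sub_gammaP {p : ℕ} (hp : 0 < p) (γ : ℝ) : γ / p ≤ γ - gammaP p γ := by
  have hp0 : (0 : ℝ) < p := by exact_mod_cast hp
  have h : gammaP p γ ≤ ((p : ℝ) - 1) * γ / p := by
    unfold gammaP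
    gcongr
    exact Int.floor_le _
  have e : ((p : ℝ) - 1) * γ / p = γ - γ / p := by field_simp
  linarith

theorem sub_le_div_one_sub_sub {a g : ℝ} (hg : 0 ≤ g) (hga : g ≤ a) (ha : a < 1) :
    a - g ≤ a / (1 - a) - g / (1 - g) := by
  have h1 : 0 < 1 - a := by linarith
  have h2 : 0 < 1 - g := by linarith
  have e : a / (1 - a) - g / (1 - g) = (a - g) / ((1 - a) * (1 - g)) := by
    field_simp
    ring
  rw [e, le_div_iff₀ (by positivity)]
  have : (1 - a) * (1 - g) ≤ 1 := mul_le_one₀ (by linarith) h2.le (by linarith)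
  exact mul_le_of_le_one_right (by linarith) this

theorem stmt_0 (p n : ℕ) (hp : 0 < p) (hn : 0 < n)
    (Γ : Set ℝ) (hΓ : Γ ⊆ Set.Ici (0 : ℝ)) (hDCC : DCC Γ) :
    ∃ m₀ : ℕ, n + 2 ≤ m₀ ∧
      ∀ γ ∈ Γ, 0 < γ → ∀ m : ℝ, (m₀ : ℝ) ≤ m →
        (1 < m * (γ - gammaP p γ) ∧ m * gammaP p γ < (⌊m * γ⌋ : ℝ)) ∧
        (γ < 1 →
          gammaP p γ / (1 - gammaP p γ) <
            ((⌊m * γ / (1 - γ)⌋ : ℝ) - n * gammaP p γ / (1 - gammaP p γ)) / (m - n)) := by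
  obtain ⟨ε, hε, hΓε⟩ := hDCC.exists_pos_lower_bound
  have hp0 : (0 : ℝ) < p := by exact_mod_cast hp
  obtain ⟨N, hN⟩ := exists_nat_gt ((p : ℝ) / ε)
  refine ⟨max (n + 2) N, le_max_left _ _, fun γ hγ hγ0 m hm => ?_⟩
  have hm' : ((n + 2 : ℕ) : ℝ) ≤ m ∧ (N : ℝ) ≤ m := by
    rw [Nat.cast_max] at hm
    exact max_le_iff.1 hm
  obtain ⟨hmn, hmN⟩ := hm'
  push_cast at hmn
  have hm0 : 0 < m := by
    have : (0 : ℝ) ≤ n := n.cast_nonneg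
    linarith
  have hgap := div_le_sub_gammaP hp γ
  have hg0 := gammaP_nonneg hp hγ0.le
  have hdiv : 0 < γ / p := by positivity
  generalize gammaP p γ = g at *
  have h1 : 1 < m * (γ - g) := by
    have hpm : (p : ℝ) < m * ε := (div_lt_iff₀ hε).1 (by linarith)
    have hεγ : m * ε ≤ m * γ := mul_le_mul_of_nonneg_left (hΓε γ hγ hγ0) hm0.le
    calc 1 < m * γ / p := (one_lt_div hp0).2 (by linarith)
      _ = m * (γ / p) := mul_div_assoc _ _ _
      _ ≤ m * (γ - g) := mul_le_mul_of_nonneg_left hgap hm0.le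
  refine ⟨⟨h1, ?_⟩, fun hγ1 => ?_⟩
  · have := Int.sub_one_lt_floor (m * γ)
    linarith
  · have h2 := mul_le_mul_of_nonneg_left
      (sub_le_div_one_sub_sub hg0 (by linarith) hγ1) hm0.le
    have h3 := Int.sub_one_lt_floor (m * γ / (1 - γ))
    rw [lt_div_iff₀ (by linarith), mul_div_assoc (n : ℝ) g]
    rw [mul_sub m (γ / (1 - γ)), ← mul_div_assoc m γ] at h2
    linarith
end

section
/- Let Γ ⊆ [0,∞) be a set of real numbers satisfying the descending chain condition and let Γ₀ ⊆ ℝ be a finite set. Then the set {γ ∈ Γ : there exist k ≥ 0 and γ₁,…,γ_k ∈ Γ with γ + γ₁ + ⋯ + γ_k ∈ Γ₀} is finite. -/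
theorem DCC.isPWO {S : Set ℝ} (h : DCC S) : S.IsPWO := by
  rw [Set.isPWO_iff_isWF, Set.isWF_iff_no_descending_seq]
  intro f hf hmem
  exact h f (fun k => hmem k) hf

theorem stmt_5 (Γ : Set ℝ) (hΓ : Γ ⊆ Set.Ici (0 : ℝ)) (hDCC : DCC Γ)
    (Γ₀ : Set ℝ) (hΓ₀ : Γ₀.Finite) :
    {γ : ℝ | γ ∈ Γ ∧ ∃ l : List ℝ, (∀ y ∈ l, y ∈ Γ) ∧ γ + l.sum ∈ Γ₀}.Finite := by
  have hcl : (AddSubmonoid.closure Γ : Set ℝ).IsPWO :=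
    Set.IsPWO.addSubmonoid_closure (fun x hx => hΓ hx) hDCC.isPWO
  refine (hΓ₀.biUnion fun a _ =>
    (Set.AddAntidiagonal.finite_of_isPWO hDCC.isPWO hcl a).image Prod.fst).subset ?_
  rintro γ ⟨hγ, l, hl, hsum⟩
  refine Set.mem_biUnion hsum ⟨(γ, l.sum), ⟨hγ, ?_, rfl⟩, rfl⟩
  exact AddSubmonoid.list_sum_mem _ fun y hy => AddSubmonoid.subset_closure (hl y hy)
end

section
/- Let Γ ⊆ [0,∞) be a set of real numbers satisfying the descending chain condition. Then there exists a set Γ' ⊆ [0,1] satisfying the descending chain condition, depending only on Γ, with the following property. Let r be a positive integer, a a nonnegative integer, t ∈ Γ with t < 1, let l, m, n be nonnegative integers, let p₁,…,p_l, q₁,…,q_m, λ₁,…,λ_n be nonnegative integers, let b₁,…,b_l, c₁,…,c_m, μ₁,…,μ_n be elements of Γ, and set v := (1/r)·( t·a + Σᵢ pᵢ·bᵢ + (1−t)·(r−1 + Σₖ qₖ·cₖ) + Σⱼ λⱼ·μⱼ ). If v ≤ 1−t, then v/(1−t) ∈ Γ'. -/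
theorem dcc_iff_isPWO (S : Set ℝ) : DCC S ↔ S.IsPWO := by
  rw [Set.isPWO_iff_isWF, Set.isWF_iff_no_descending_seq]
  exact ⟨fun h f hf hmem => h f hmem hf, fun h f hmem hf => h f hf hmem⟩

/-- The coefficient `v / (1 - t)` as a function of `(r, t, A, C)`. -/
noncomputable def adjCoeff (x : ℕ × ℝ × ℝ × ℝ) : ℝ :=
  1 - (1 - (x.2.2.1 / (1 - x.2.1) + x.2.2.2)) / (x.1 : ℝ)

/-- The admissible quadruples `(r, t, A, C)`: positive index, `t ∈ Γ` less than `1`, both `A` and `C`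
sums of elements of `Γ`, and `A / (1 - t) + C ≤ 1`. -/
def adjDomain (Γ : Set ℝ) : Set (ℕ × ℝ × ℝ × ℝ) :=
  {x | 0 < x.1 ∧ x.2.1 ∈ Γ ∧ x.2.1 < 1 ∧ x.2.2.1 ∈ AddSubmonoid.closure Γ ∧
    x.2.2.2 ∈ AddSubmonoid.closure Γ ∧ x.2.2.1 / (1 - x.2.1) + x.2.2.2 ≤ 1}

theorem nonneg_of_mem_closure {Γ : Set ℝ} (hΓ : Γ ⊆ Set.Ici (0 : ℝ)) {x : ℝ}
    (hx : x ∈ AddSubmonoid.closure Γ) : 0 ≤ x :=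
  (AddSubmonoid.closure_le (S := AddSubmonoid.nonneg ℝ)).2 hΓ hx

theorem adjDomain_isPWO {Γ : Set ℝ} (hΓ : Γ ⊆ Set.Ici (0 : ℝ)) (h : Γ.IsPWO) :
    (adjDomain Γ).IsPWO := by
  have hM : (AddSubmonoid.closure Γ : Set ℝ).IsPWO := Set.IsPWO.addSubmonoid_closure hΓ h
  have hN : (Set.univ : Set ℕ).IsPWO := Set.isPWO_iff_isWF.2 (Set.IsWF.of_wellFoundedLT _)
  refine (hN.prod (h.prod (hM.prod hM))).mono ?_
  rintro ⟨r, t, A, C⟩ ⟨-, ht, -, hA, hC, -⟩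
  exact ⟨trivial, ht, hA, hC⟩

/-- Increasing `t`, `A` or `C` increases `A / (1 - t) + C` because `A ≥ 0`; since this quantity is at
most `1`, increasing `r` shrinks `(1 - (A / (1 - t) + C)) / r`. -/
theorem adjCoeff_monotoneOn {Γ : Set ℝ} (hΓ : Γ ⊆ Set.Ici (0 : ℝ)) :
    MonotoneOn adjCoeff (adjDomain Γ) := by
  rintro ⟨r, t, A, C⟩ ⟨hr, -, -, -, -, hle⟩ ⟨r', t', A', C'⟩ ⟨-, -, ht', hA', -, -⟩
    ⟨hrr, htt, hAA, hCC⟩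
  simp only at *
  have hA0 : 0 ≤ A' := nonneg_of_mem_closure hΓ hA'
  have hr0 : (0 : ℝ) < r := by exact_mod_cast hr
  have hrr' : (r : ℝ) ≤ r' := by exact_mod_cast hrr
  have hdiv : A / (1 - t) ≤ A' / (1 - t') :=
    div_le_div₀ hA0 hAA (by linarith) (by linarith)
  have h1 : (1 - (A' / (1 - t') + C')) / (r' : ℝ) ≤ (1 - (A / (1 - t) + C)) / (r' : ℝ) := by
    gcongr
  have h2 : (1 - (A / (1 - t) + C)) / (r' : ℝ) ≤ (1 - (A / (1 - t) + C)) / (r : ℝ) :=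
    div_le_div_of_nonneg_left (by linarith) hr0 hrr'
  simp only [adjCoeff]
  linarith

theorem adjCoeff_mem_Icc {Γ : Set ℝ} (hΓ : Γ ⊆ Set.Ici (0 : ℝ)) {x : ℕ × ℝ × ℝ × ℝ}
    (hx : x ∈ adjDomain Γ) : adjCoeff x ∈ Set.Icc (0 : ℝ) 1 := by
  obtain ⟨r, t, A, C⟩ := x
  obtain ⟨hr, -, ht, hA, hC, hle⟩ := hx
  simp only at *
  have hA0 := nonneg_of_mem_closure hΓ hA
  have hC0 := nonneg_of_mem_closure hΓ hC
  have hr1 : (1 : ℝ) ≤ r := by exact_mod_cast hr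
  have hdiv : 0 ≤ A / (1 - t) := div_nonneg hA0 (by linarith)
  have h1 : 0 ≤ (1 - (A / (1 - t) + C)) / (r : ℝ) := div_nonneg (by linarith) (by linarith)
  have h2 : (1 - (A / (1 - t) + C)) / (r : ℝ) ≤ 1 := by
    rw [div_le_one (by linarith)]
    linarith
  simp only [adjCoeff]
  exact ⟨by linarith, by linarith⟩

theorem natCast_mul_mem_closure {Γ : Set ℝ} (k : ℕ) {x : ℝ} (hx : x ∈ Γ) :
    (k : ℝ) * x ∈ AddSubmonoid.closure Γ := by
  rw [← nsmul_eq_mul]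
  exact nsmul_mem (AddSubmonoid.subset_closure hx) k


theorem stmt_6 (Γ : Set ℝ) (hΓ : Γ ⊆ Set.Ici (0 : ℝ)) (hDCC : DCC Γ) :
    ∃ Γ' : Set ℝ, Γ' ⊆ Set.Icc (0 : ℝ) 1 ∧ DCC Γ' ∧
      ∀ (r : ℕ), 0 < r → ∀ (a : ℕ) (t : ℝ), t ∈ Γ → t < 1 →
        ∀ (l m n : ℕ) (p : Fin l → ℕ) (q : Fin m → ℕ) (lam : Fin n → ℕ)
          (b : Fin l → ℝ) (c : Fin m → ℝ) (mu : Fin n → ℝ),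
          (∀ i, b i ∈ Γ) → (∀ k, c k ∈ Γ) → (∀ j, mu j ∈ Γ) →
          ∀ v : ℝ,
            v = (1 / (r : ℝ)) * (t * (a : ℝ) + (∑ i, (p i : ℝ) * b i)
                + (1 - t) * ((r : ℝ) - 1 + ∑ k, (q k : ℝ) * c k)
                + ∑ j, (lam j : ℝ) * mu j) →
            v ≤ 1 - t → v / (1 - t) ∈ Γ' := by
  refine ⟨adjCoeff '' adjDomain Γ, ?_, ?_, ?_⟩
  · rintro _ ⟨x, hx, rfl⟩
    exact adjCoeff_mem_Icc hΓ hx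
  · rw [dcc_iff_isPWO] at hDCC ⊢
    exact (adjDomain_isPWO hΓ hDCC).image_of_monotoneOn (adjCoeff_monotoneOn hΓ)
  · intro r hr a t ht ht1 l m n p q lam b c mu hb hc hmu v hv hle
    have hr0 : (0 : ℝ) < r := by exact_mod_cast hr
    have ht0 : 0 < 1 - t := by linarith
    have hA : t * (a : ℝ) + (∑ i, (p i : ℝ) * b i) + ∑ j, (lam j : ℝ) * mu j
        ∈ AddSubmonoid.closure Γ := by
      refine add_mem (add_mem ?_ (sum_mem fun i _ => natCast_mul_mem_closure _ (hb i)))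
        (sum_mem fun j _ => natCast_mul_mem_closure _ (hmu j))
      rw [mul_comm]
      exact natCast_mul_mem_closure _ ht
    have hC : ∑ k, (q k : ℝ) * c k ∈ AddSubmonoid.closure Γ :=
      sum_mem fun k _ => natCast_mul_mem_closure _ (hc k)
    set P := ∑ i, (p i : ℝ) * b i
    set Q := ∑ k, (q k : ℝ) * c k
    set L := ∑ j, (lam j : ℝ) * mu j
    have hval : adjCoeff (r, t, t * (a : ℝ) + P + L, Q) = v / (1 - t) := by
      simp only [adjCoeff, hv]
      field_simp
      ring
    refine ⟨_, ⟨hr, ht, ht1, hA, hC, ?_⟩, hval⟩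
    have hle1 : v / (1 - t) ≤ 1 := (div_le_one ht0).2 hle
    rw [← hval] at hle1
    simp only [adjCoeff] at hle1
    -- Clearing the factor `1 / r` turns `v / (1 - t) ≤ 1` into `A / (1 - t) + C ≤ 1`.
    have h0 : 0 ≤ (1 - ((t * (a : ℝ) + P + L) / (1 - t) + Q)) / (r : ℝ) := by linarith
    have h1 := (le_div_iff₀ hr0).1 h0
    rw [zero_mul] at h1
    simp only
    linarith
end

section
/- Let Γ ⊆ [0,∞) be a set of real numbers satisfying the descending chain condition and let Γ₀ ⊆ [0,∞) be a finite set. Then there exists a finite set Γ₀' of real numbers, depending only on Γ and Γ₀, with the following property. Let r be a positive integer, a a nonnegative integer, t ∈ Γ with t < 1, let l, m, n be nonnegative integers, p₁,…,p_l, q₁,…,q_m, λ₁,…,λ_n nonnegative integers, b₁,…,b_l, c₁,…,c_m, μ₁,…,μ_n elements of Γ, and set v := (1/r)·( t·a + Σᵢ pᵢ·bᵢ + (1−t)·(r−1 + Σₖ qₖ·cₖ) + Σⱼ λⱼ·μⱼ ). If v ≤ 1−t and v/(1−t) ∈ Γ₀, then t·a ∈ Γ₀', t·pᵢ·bᵢ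 ∈ Γ₀' for every i, qₖ·cₖ ∈ Γ₀' for every k, and t·λⱼ·μⱼ ∈ Γ₀' for every j. In particular, if a + Σᵢ pᵢ·bᵢ + Σⱼ λⱼ·μⱼ > 0, then t ∈ Γ₀'. -/
/-- A set that is both DCC and ACC is finite: here the ACC of the left-hand elements comes from an
order-reversing relation to the well-ordered set `B`. -/
theorem finite_of_strictAnti_rel {A B : Set ℝ} (hA : A.IsPWO) (hB : B.IsPWO) (R : ℝ → ℝ → Prop)
    (hR : ∀ x y x' y', R x y → R x' y' → x < x' → y' < y) :
    {x | x ∈ A ∧ ∃ y ∈ B, R x y}.Finite := by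
  by_contra hinf
  let e := Set.Infinite.natEmbedding _ hinf
  obtain ⟨g, hg⟩ := hA.exists_monotone_subseq (f := fun n => (e n : ℝ)) (fun n => (e n).2.1)
  have hmono : StrictMono (fun n => (e (g n) : ℝ)) := by
    refine hg.strictMono_of_injective ?_
    intro i j hij
    exact g.injective (e.injective (Subtype.ext hij))
  choose y hyB hy using fun n => (e (g n)).2.2
  have hanti : StrictAnti y := fun i j hij => hR _ _ _ _ (hy i) (hy j) (hmono hij)
  rw [Set.isPWO_iff_isWF, Set.isWF_iff_no_descending_seq] at hB
  exact hB y hanti hyB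

/-- The values of `1 - r * (1 - s)` that lie in `[0, 1]`, for `s` in a finite set, form a finite
set: `r` is bounded unless `s = 1`. -/
theorem exists_finite_weights {Γ₀ : Set ℝ} (hΓ₀ : Γ₀.Finite) :
    ∃ W : Set ℝ, W.Finite ∧ ∀ s ∈ Γ₀, s ≤ 1 → ∀ r : ℕ, 0 ≤ 1 - (r : ℝ) * (1 - s) →
      1 - (r : ℝ) * (1 - s) ∈ W := by
  refine ⟨{1} ∪ ⋃ s ∈ Γ₀, (fun r : ℕ => 1 - (r : ℝ) * (1 - s)) '' Set.Iic ⌈1 / (1 - s)⌉₊,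
    (Set.finite_singleton _).union (hΓ₀.biUnion fun s _ => (Set.finite_Iic _).image _), ?_⟩
  intro s hs hs1 r hr
  rcases hs1.eq_or_lt with rfl | hlt
  · left; simp
  · right
    refine Set.mem_biUnion hs ⟨r, ?_, rfl⟩
    have h1 : (0 : ℝ) < 1 - s := by linarith
    have h2 : (r : ℝ) ≤ 1 / (1 - s) := by
      rw [le_div_iff₀ h1]; linarith
    exact_mod_cast h2.trans (Nat.le_ceil _)

/-- If a product of two factors from well-ordered sets takes finitely many positive values, then
each factor takes finitely many values. -/
theorem exists_finite_factors {U M F : Set ℝ} (hU : U.IsPWO) (hM : M.IsPWO) (hF : F.Finite)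
    (hU0 : ∀ u ∈ U, 0 < u) :
    ∃ U' M' : Set ℝ, U'.Finite ∧ M'.Finite ∧
      ∀ u ∈ U, ∀ m ∈ M, 0 < m → u * m ∈ F → u ∈ U' ∧ m ∈ M' := by
  have key : ∀ f x y x' y' : ℝ, (0 < x ∧ 0 < y ∧ x * y = f) → (0 < x' ∧ 0 < y' ∧ x' * y' = f) →
      x < x' → y' < y := by
    rintro f x y x' y' ⟨hx, hy, h⟩ ⟨hx', hy', h'⟩ hlt
    by_contra! hle
    nlinarith [mul_lt_mul_of_pos_right hlt hy, mul_le_mul_of_nonneg_left hle hx'.le]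
  refine ⟨⋃ f ∈ F, {x | x ∈ U ∧ ∃ y ∈ M, 0 < x ∧ 0 < y ∧ x * y = f},
    ⋃ f ∈ F, {x | x ∈ M ∧ ∃ y ∈ U, 0 < x ∧ 0 < y ∧ x * y = f},
    hF.biUnion fun f _ => finite_of_strictAnti_rel hU hM _ (key f),
    hF.biUnion fun f _ => finite_of_strictAnti_rel hM hU _ (key f), ?_⟩
  intro u hu m hm hm0 hmem
  exact ⟨Set.mem_biUnion hmem ⟨hu, m, hm, hU0 u hu, hm0, rfl⟩,
    Set.mem_biUnion hmem ⟨hm, u, hu, hm0, hU0 u hu, mul_comm _ _⟩⟩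

theorem isPWO_mul_of_nonneg {U M : Set ℝ} (hU : U.IsPWO) (hM : M.IsPWO)
    (hU0 : ∀ u ∈ U, 0 ≤ u) (hM0 : ∀ m ∈ M, 0 ≤ m) :
    ((fun z : ℝ × ℝ => z.1 * z.2) '' (U ×ˢ M)).IsPWO := by
  refine (hU.prod hM).image_of_monotoneOn ?_
  rintro ⟨x, y⟩ ⟨hx, hy⟩ ⟨x', y'⟩ ⟨hx', hy'⟩ ⟨h1, h2⟩
  exact mul_le_mul h1 h2 (hM0 _ hy) (hU0 _ hx')

theorem stmt_8 (Γ : Set ℝ) (hΓ : Γ ⊆ Set.Ici (0 : ℝ)) (hDCC : DCC Γ)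
    (Γ₀ : Set ℝ) (hΓ₀sub : Γ₀ ⊆ Set.Ici (0 : ℝ)) (hΓ₀ : Γ₀.Finite) :
    ∃ Γ₀' : Set ℝ, Γ₀'.Finite ∧
      ∀ (r : ℕ), 0 < r → ∀ (a : ℕ) (t : ℝ), t ∈ Γ → t < 1 →
        ∀ (l m n : ℕ) (p : Fin l → ℕ) (q : Fin m → ℕ) (lam : Fin n → ℕ)
          (b : Fin l → ℝ) (c : Fin m → ℝ) (mu : Fin n → ℝ),
          (∀ i, b i ∈ Γ) → (∀ k, c k ∈ Γ) → (∀ j, mu j ∈ Γ) →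
          ∀ v : ℝ,
            v = (1 / (r : ℝ)) * (t * (a : ℝ) + (∑ i, (p i : ℝ) * b i)
                + (1 - t) * ((r : ℝ) - 1 + ∑ k, (q k : ℝ) * c k)
                + ∑ j, (lam j : ℝ) * mu j) →
            v ≤ 1 - t → v / (1 - t) ∈ Γ₀ →
            (t * (a : ℝ) ∈ Γ₀' ∧
              (∀ i, t * ((p i : ℝ) * b i) ∈ Γ₀') ∧
              (∀ k, (q k : ℝ) * c k ∈ Γ₀') ∧
              (∀ j, t * ((lam j : ℝ) * mu j) ∈ Γ₀') ∧
              (0 < (a : ℝ) + (∑ i, (p i : ℝ) * b i) + (∑ j, (lam j : ℝ) * mu j) →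
                t ∈ Γ₀')) := by
  obtain ⟨W, hWfin, hW⟩ := exists_finite_weights hΓ₀
  let M : AddSubmonoid ℝ := AddSubmonoid.closure Γ
  have hMpwo : (M : Set ℝ).IsPWO := Set.IsPWO.addSubmonoid_closure (fun x hx => hΓ hx) hDCC.isPWO
  have hM0 : ∀ x ∈ M, 0 ≤ x := fun x hx =>
    AddSubmonoid.closure_induction (motive := fun x _ => 0 ≤ x) (fun x hx => hΓ hx) le_rfl
      (fun _ _ _ _ h h' => add_nonneg h h') hx
  have hmulM : ∀ (k : ℕ), ∀ x ∈ Γ, (k : ℝ) * x ∈ M := fun k x hx => by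
    rw [← nsmul_eq_mul]
    exact M.nsmul_mem (AddSubmonoid.subset_closure hx) k
  let U : Set ℝ := (fun t : ℝ => 1 / (1 - t)) '' (Γ ∩ Set.Iio 1)
  have hUpwo : U.IsPWO := by
    refine (hDCC.isPWO.mono Set.inter_subset_left).image_of_monotoneOn ?_
    intro x hx y hy hxy
    have hy1 : y < 1 := hy.2
    exact one_div_le_one_div_of_le (by linarith) (by linarith)
  have hU0 : ∀ u ∈ U, 0 < u := by
    rintro _ ⟨t, ht, rfl⟩
    have : t < 1 := ht.2
    exact one_div_pos.2 (by linarith)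
  let G : Set ℝ := (M : Set ℝ) ∪ (fun z : ℝ × ℝ => z.1 * z.2) '' (U ×ˢ (M : Set ℝ))
  let D : AddSubmonoid ℝ := AddSubmonoid.closure G
  have hG0 : ∀ x ∈ G, 0 ≤ x := by
    rintro x (hx | ⟨⟨u, y⟩, ⟨hu, hy⟩, rfl⟩)
    · exact hM0 x hx
    · exact mul_nonneg (hU0 u hu).le (hM0 y hy)
  have hDpwo : (D : Set ℝ).IsPWO := Set.IsPWO.addSubmonoid_closure hG0
    (hMpwo.union (isPWO_mul_of_nonneg hUpwo hMpwo (fun u hu => (hU0 u hu).le) hM0))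
  have hD0 : ∀ x ∈ D, 0 ≤ x := fun x hx =>
    AddSubmonoid.closure_induction (motive := fun x _ => 0 ≤ x) hG0 le_rfl
      (fun _ _ _ _ h h' => add_nonneg h h') hx
  have hMD : ∀ x ∈ M, x ∈ D := fun x hx => AddSubmonoid.subset_closure (Or.inl hx)
  have hUMD : ∀ u ∈ U, ∀ x ∈ M, u * x ∈ D := fun u hu x hx =>
    AddSubmonoid.subset_closure (Or.inr ⟨(u, x), ⟨hu, hx⟩, rfl⟩)
  let F : Set ℝ := ⋃ w ∈ W, {x | x ∈ (D : Set ℝ) ∧ ∃ y ∈ (D : Set ℝ), x + y = w}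
  have hFfin : F.Finite := hWfin.biUnion fun w _ =>
    finite_of_strictAnti_rel hDpwo hDpwo _ (fun x y x' y' h h' hlt => by linarith)
  have hF : ∀ x ∈ D, ∀ y ∈ D, x + y ∈ W → x ∈ F := fun x hx y hy h =>
    Set.mem_biUnion h ⟨hx, y, hy, rfl⟩
  obtain ⟨U', M', hU'fin, hM'fin, hUM⟩ := exists_finite_factors hUpwo hMpwo hFfin hU0
  -- The parameter is recovered from `u = 1 / (1 - t)` as `1 - 1 / u`.
  let T : Set ℝ := (fun u : ℝ => 1 - 1 / u) '' U'
  have hTfin : T.Finite := hU'fin.image _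
  refine ⟨{0} ∪ F ∪ M' ∪ T ∪ Set.image2 (fun x y => x * y) T M',
    ((((Set.finite_singleton 0).union hFfin).union hM'fin).union hTfin).union
      (hTfin.image2 _ hM'fin), ?_⟩
  intro r hr a t htΓ ht1 l m n p q lam b c mu hb hc hmu v hv hv1 hvΓ
  have ht0 : 0 ≤ t := hΓ htΓ
  have h1t : 0 < 1 - t := by linarith
  have hr0 : (0 : ℝ) < r := by exact_mod_cast hr
  obtain ⟨u, hu⟩ : ∃ u, u = 1 / (1 - t) := ⟨_, rfl⟩
  have huU : u ∈ U := ⟨t, ⟨htΓ, ht1⟩, hu.symm⟩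
  have hut : 1 - 1 / u = t := by rw [hu, one_div_one_div]; ring
  have hta : t * (a : ℝ) ∈ M := by rw [mul_comm]; exact hmulM a t htΓ
  have hpb : ∀ i, (p i : ℝ) * b i ∈ M := fun i => hmulM _ _ (hb i)
  have hqc : ∀ k, (q k : ℝ) * c k ∈ M := fun k => hmulM _ _ (hc k)
  have hlm : ∀ j, (lam j : ℝ) * mu j ∈ M := fun j => hmulM _ _ (hmu j)
  have heq : 1 - (r : ℝ) * (1 - v / (1 - t)) = u * (t * a) + ∑ i, u * ((p i : ℝ) * b i)
      + ∑ k, (q k : ℝ) * c k + ∑ j, u * ((lam j : ℝ) * mu j) := by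
    rw [← Finset.mul_sum, ← Finset.mul_sum, hv, hu]
    field_simp
    ring
  have hA : u * (t * a) ∈ D := hUMD u huU _ hta
  have hP : ∑ i, u * ((p i : ℝ) * b i) ∈ D := D.sum_mem fun i _ => hUMD u huU _ (hpb i)
  have hQ : ∑ k, (q k : ℝ) * c k ∈ D := D.sum_mem fun k _ => hMD _ (hqc k)
  have hL : ∑ j, u * ((lam j : ℝ) * mu j) ∈ D := D.sum_mem fun j _ => hUMD u huU _ (hlm j)
  have hwW := hW _ hvΓ ((div_le_one h1t).2 hv1) r
    (by rw [heq]; exact hD0 _ (D.add_mem (D.add_mem (D.add_mem hA hP) hQ) hL))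
  rw [heq] at hwW
  have hAF : u * (t * a) ∈ F :=
    hF _ hA _ (D.add_mem (D.add_mem hP hQ) hL) (by rw [← add_assoc, ← add_assoc]; exact hwW)
  have hsum : ∀ {N : ℕ} (g : Fin N → ℝ) (z : ℝ), (∀ i, g i ∈ D) → z ∈ D → ∑ i, g i + z ∈ W →
      ∀ i, g i ∈ F := by
    intro N g z hg hz hgz i
    refine hF _ (hg i) _ (D.add_mem (D.sum_mem (t := Finset.univ.erase i) fun k _ => hg k) hz) ?_
    rwa [← add_assoc, Finset.add_sum_erase _ _ (Finset.mem_univ i)]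
  have hPF : ∀ i, u * ((p i : ℝ) * b i) ∈ F :=
    hsum _ _ (fun i => hUMD u huU _ (hpb i)) (D.add_mem (D.add_mem hA hQ) hL)
      (by convert hwW using 1; ring)
  have hQF : ∀ k, (q k : ℝ) * c k ∈ F :=
    hsum _ _ (fun k => hMD _ (hqc k)) (D.add_mem (D.add_mem hA hP) hL)
      (by convert hwW using 1; ring)
  have hLF : ∀ j, u * ((lam j : ℝ) * mu j) ∈ F :=
    hsum _ _ (fun j => hUMD u huU _ (hlm j)) (D.add_mem (D.add_mem hA hP) hQ)
      (by convert hwW using 1; ring)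
  have hpos : ∀ x ∈ M, u * x ∈ F → 0 < x → t ∈ T ∧ x ∈ M' := fun x hx hxF hx0 => by
    obtain ⟨h1, h2⟩ := hUM u huU x hx hx0 hxF
    exact ⟨⟨u, h1, hut⟩, h2⟩
  have htx : ∀ x ∈ M, u * x ∈ F →
      t * x ∈ {0} ∪ F ∪ M' ∪ T ∪ Set.image2 (fun x y => x * y) T M' := fun x hx hxF => by
    rcases (hM0 x hx).eq_or_lt with h | h
    · simp [← h]
    · obtain ⟨h1, h2⟩ := hpos x hx hxF h
      exact Or.inr ⟨t, h1, x, h2, rfl⟩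
  refine ⟨?_, fun i => htx _ (hpb i) (hPF i), fun k => ?_, fun j => htx _ (hlm j) (hLF j), ?_⟩
  · rcases (hM0 _ hta).eq_or_lt with h | h
    · simp [← h]
    · exact Or.inl (Or.inl (Or.inr (hpos _ hta hAF h).2))
  · exact Or.inl (Or.inl (Or.inl (Or.inr (hQF k))))
  · intro hsumpos
    rcases ht0.eq_or_lt with h | htpos
    · simp [← h]
    · refine Or.inl (Or.inr ?_)
      by_contra hT
      -- If `t ∉ T`, every element of `M` among the summands vanishes, and `t > 0` gives `a = 0`.
      have hz : ∀ x ∈ M, u * x ∈ F → x = 0 := fun x hx hxF => by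
        by_contra hne
        exact hT (hpos x hx hxF (lt_of_le_of_ne (hM0 x hx) (Ne.symm hne))).1
      have ha : (a : ℝ) = 0 := (mul_eq_zero.1 (hz _ hta hAF)).resolve_left htpos.ne'
      rw [ha, Finset.sum_eq_zero fun i _ => hz _ (hpb i) (hPF i),
        Finset.sum_eq_zero fun j _ => hz _ (hlm j) (hLF j)] at hsumpos
      simp at hsumpos
end

section
/- Let ι be a type (indexing prime divisors) and let S ⊆ ι be a subset (the invariant indices). For a finitely supported function D : ι → ℝ write D^inv for the function equal to D on S and 0 outside S, and D^ninv := D − D^inv. Let B, B' : ι → ℝ be finitely supported, let t, t', s ∈ [0,1] be real numbers, and set t_s := s·t + (1−s)·t', Γ_s := s·(B^ninv + (1−t)·B^inv) + (1−s)·(B'^ninv + (1−t')·B'^inv), and Δ_s := (s·B + (1−s)·B')^ninv + (1−t_s)·(s·B + (1−s)·B')^inv. Then: (i) Δ_s − Γ_s = s·(1−s)·(t−t')·(B^inv − B'^inv); (ii) consequently Δ_s^ninv = Γ_s^ninv = (s·B + (1−s)·B')^ninv; (iii) if (B ≥ B' pointwise and t ≥ t') or (B' ≥ B pointwise and t' ≥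 t), then Δ_s ≥ Γ_s pointwise; and (iv) Δ_s = Γ_s if and only if s = 0, or s = 1, or t = t', or B^inv = B'^inv. -/
/-!
Outside `S` both `Δ_s` and `Γ_s` equal `s B + (1 - s) B'`. On `S`, the identities
`t - t_s = (1 - s) (t - t')` and `t' - t_s = -s (t - t')` turn
`(1 - t_s) (s B + (1 - s) B') - s (1 - t) B - (1 - s) (1 - t') B'` into
`s (1 - s) (t - t') (B - B')`. The inequality and the characterization of equality are read off
from the sign and the vanishing of the factors of this product.
-/

/-- The invariant part of an ℝ-divisor `D` (modeled as a function on an index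
type of prime divisors) with respect to the set `S` of invariant indices:
it agrees with `D` on `S` and vanishes outside `S`. -/
noncomputable def invPart {ι : Type*} (S : Set ι) (D : ι → ℝ) : ι → ℝ :=
  S.indicator D

/-- The non-invariant part `D^ninv := D − D^inv`. -/
noncomputable def ninvPart {ι : Type*} (S : Set ι) (D : ι → ℝ) : ι → ℝ :=
  fun i => D i - invPart S D i

theorem stmt_12 {ι : Type*} (S : Set ι) (B B' : ι → ℝ)
    (hB : (Function.support B).Finite) (hB' : (Function.support B').Finite)
    (t t' s : ℝ) (ht : t ∈ Set.Icc (0 : ℝ) 1) (ht' : t' ∈ Set.Icc (0 : ℝ) 1)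
    (hs : s ∈ Set.Icc (0 : ℝ) 1) :
    let ts := s * t + (1 - s) * t'
    let Γs : ι → ℝ := fun i =>
      s * (ninvPart S B i + (1 - t) * invPart S B i)
        + (1 - s) * (ninvPart S B' i + (1 - t') * invPart S B' i)
    let Bs : ι → ℝ := fun i => s * B i + (1 - s) * B' i
    let Δs : ι → ℝ := fun i => ninvPart S Bs i + (1 - ts) * invPart S Bs i
    -- (i)
    (∀ i, Δs i - Γs i = s * (1 - s) * (t - t') * (invPart S B i - invPart S B' i)) ∧
    -- (ii)
    (ninvPart S Δs = ninvPart S Γs ∧ ninvPart S Γs = ninvPart S Bs) ∧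
    -- (iii)
    ((((∀ i, B' i ≤ B i) ∧ t' ≤ t) ∨ ((∀ i, B i ≤ B' i) ∧ t ≤ t')) →
      ∀ i, Γs i ≤ Δs i) ∧
    -- (iv)
    (Δs = Γs ↔ s = 0 ∨ s = 1 ∨ t = t' ∨ invPart S B = invPart S B') := by
  intro ts Γs Bs Δs
  have key : ∀ i, Δs i - Γs i =
      s * (1 - s) * (t - t') * (invPart S B i - invPart S B' i) := by
    intro i
    by_cases hi : i ∈ S <;> simp [Δs, Γs, Bs, ts, ninvPart, invPart, hi]
    ring
  refine ⟨key, ⟨?_, ?_⟩, ?_, ?_⟩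
  · funext i
    by_cases hi : i ∈ S
    · simp [ninvPart, invPart, hi]
    · have h := key i
      simp only [invPart, Set.indicator_of_notMem hi, sub_self, mul_zero] at h
      simpa [ninvPart, invPart, hi] using sub_eq_zero.mp h
  · funext i
    by_cases hi : i ∈ S <;> simp [Γs, Bs, ninvPart, invPart, hi]
  · intro h i
    have hs' : 0 ≤ s * (1 - s) := mul_nonneg hs.1 (sub_nonneg.mpr hs.2)
    rw [← sub_nonneg, key i, mul_assoc]
    refine mul_nonneg hs' ?_
    rcases h with ⟨hBB, htt⟩ | ⟨hBB, htt⟩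
    · exact mul_nonneg (sub_nonneg.mpr htt)
        (sub_nonneg.mpr (Set.indicator_le_indicator (hBB i)))
    · exact mul_nonneg_of_nonpos_of_nonpos (sub_nonpos.mpr htt)
        (sub_nonpos.mpr (Set.indicator_le_indicator (hBB i)))
  · constructor
    · intro h
      by_contra! hne
      obtain ⟨h0, h1, htt, hinv⟩ := hne
      refine hinv (funext fun i => ?_)
      have hk := key i
      rw [h, sub_self, eq_comm] at hk
      have hc : s * (1 - s) * (t - t') ≠ 0 :=
        mul_ne_zero (mul_ne_zero h0 (sub_ne_zero.mpr h1.symm)) (sub_ne_zero.mpr htt)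
      exact sub_eq_zero.mp ((mul_eq_zero.mp hk).resolve_left hc)
    · intro h
      funext i
      rw [← sub_eq_zero, key i]
      rcases h with h | h | h | h <;> simp [h]
end
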